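/- arXiv:2412.00336 — 3 statements merged into one kernel-verified Lean document; each statement's English description precedes it below -/
import Mathlib

section
/- For all n ≥ 2, the number of nonnesting permutations of the multiset {1,1,2,2,…,n,n} that avoid both patterns 132 and 312 equals 4·3^(n−2). -/
/-- `w` is a permutation of the multiset `{1,1,2,2,…,n,n}`:
a word in which every value in `{1,…,n}` occurs exactly twice
and no other value occurs. -/
def IsMultisetPerm (n : ℕ) (w : List ℕ) : Prop :=
  ∀ i : ℕ, w.count i = if 1 ≤ i ∧ i ≤ n then 2 else 0

/-- `t` is order-isomorphic to the word `σ`: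
same length, and entries compare (both `<` and `=`) in the same way. -/
def OrderIsoWord (t σ : List ℕ) : Prop :=
  t.length = σ.length ∧
  ∀ r s : ℕ, r < σ.length → s < σ.length →
    ((t.getD r 0 < t.getD s 0 ↔ σ.getD r 0 < σ.getD s 0) ∧
     (t.getD r 0 = t.getD s 0 ↔ σ.getD r 0 = σ.getD s 0))

/-- `w` contains the pattern `σ`: some subsequence of `w`
is order-isomorphic to `σ`. -/
def Contains (w σ : List ℕ) : Prop :=
  ∃ t : List ℕ, t.Sublist w ∧ OrderIsoWord t σ

/-- `w` avoids the pattern `σ`. -/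
def Avoids (w σ : List ℕ) : Prop := ¬ Contains w σ

/-- `w` is a nonnesting permutation of `{1,1,2,2,…,n,n}`:
it avoids the patterns `1221` and `2112`. -/
def IsNonnesting (n : ℕ) (w : List ℕ) : Prop :=
  IsMultisetPerm n w ∧ Avoids w [1,2,2,1] ∧ Avoids w [2,1,1,2]

namespace NN

variable {α : Type} [LinearOrder α]

/-- Reversed avoidance of 132 and 312. -/
def P3 (w : List α) : Prop :=
  ∀ a b c, [c, b, a].Sublist w → ¬ (a < c ∧ c < b) ∧ ¬ (b < c ∧ c < a)

/-- Nonnesting. -/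
def P4 (w : List α) : Prop := ∀ a b, a ≠ b → ¬ [a, b, b, a].Sublist w

/-- Good (reversed) words on the alphabet `s`. -/
def G (s : Finset α) (w : List α) : Prop :=
  (∀ i, w.count i = if i ∈ s then 2 else 0) ∧ P3 w ∧ P4 w

theorem pair_sub (w : List α) (a b : α) (ha : a ∈ w) (hb : b ∈ w) (h : a ≠ b) :
    [a, b].Sublist w ∨ [b, a].Sublist w := by
  induction w with
  | nil => simp at ha
  | cons x w ih =>
    simp only [List.cons_sublist_cons', List.singleton_sublist, List.mem_cons] at *
    grind

theorem P3_cons (c : α) (w : List α) :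
    P3 (c :: w) ↔ P3 w ∧ ((∀ a ∈ w, a ≤ c) ∨ (∀ a ∈ w, c ≤ a)) := by
  constructor
  · intro h
    refine ⟨fun a b d hs => h a b d (hs.trans (List.sublist_cons_self _ _)), ?_⟩
    by_contra hcon
    push Not at hcon
    obtain ⟨⟨b, hb, hb'⟩, a, ha, ha'⟩ := hcon
    have hne : a ≠ b := (ha'.trans hb').ne
    rcases pair_sub w a b ha hb hne with h1 | h1
    · exact (h b a c (h1.cons_cons c)).2 ⟨ha', hb'⟩
    · exact (h a b c (h1.cons_cons c)).1 ⟨ha', hb'⟩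
  · rintro ⟨h, h'⟩ a b d hs
    rw [List.cons_sublist_cons'] at hs
    rcases hs with hs | ⟨rfl, hs⟩
    · exact h a b d hs
    · have hb : b ∈ w := hs.subset (by simp)
      have ha : a ∈ w := hs.subset (by simp)
      rcases h' with h' | h'
      · exact ⟨fun h => absurd (h' b hb) (not_le.2 h.2), fun h => absurd (h' a ha) (not_le.2 h.2)⟩
      · exact ⟨fun h => absurd (h' a ha) (not_le.2 h.1), fun h => absurd (h' b hb) (not_le.2 h.1)⟩

theorem P4_cons (x : α) (w : List α) :
    P4 (x :: w) ↔ P4 w ∧ ∀ b, b ≠ x → ¬ [b, b, x].Sublist w := by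
  constructor
  · intro h
    exact ⟨fun a b hab hs => h a b hab (hs.trans (List.sublist_cons_self _ _)),
      fun b hb hs => h x b hb.symm (hs.cons_cons x)⟩
  · rintro ⟨h, h'⟩ a b hab hs
    rw [List.cons_sublist_cons'] at hs
    rcases hs with hs | ⟨rfl, hs⟩
    · exact h a b hab hs
    · exact h' b hab.symm hs

theorem G_mem {s : Finset α} {w : List α} (h : G s w) (a : α) : a ∈ w ↔ a ∈ s := by
  have := h.1 a
  rw [← List.count_pos_iff, this]
  split_ifs <;> simp_all

theorem G_type1 {s : Finset α} {M : α} (hM : IsGreatest (s : Set α) M) (w : List α) :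
    G s (M :: M :: w) ↔ G (s.erase M) w := by
  have hMs : M ∈ s := hM.1
  constructor
  · rintro ⟨h1, h2, h3⟩
    rw [P3_cons, P3_cons] at h2
    rw [P4_cons, P4_cons] at h3
    refine ⟨fun i => ?_, h2.1.1, h3.1.1⟩
    have := h1 i
    simp only [List.count_cons, beq_iff_eq, Finset.mem_erase] at this ⊢
    grind
  · intro h
    have hmem := G_mem h
    obtain ⟨h1, h2, h3⟩ := h
    have hMw : M ∉ w := by simp [hmem]
    have hle : ∀ a ∈ w, a ≤ M := fun a ha => hM.2 (Finset.mem_of_mem_erase ((hmem a).1 ha))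
    have hn : ∀ b, ¬ [b, b, M].Sublist w := fun b hs => hMw (hs.subset (by simp))
    refine ⟨fun i => ?_, ?_, ?_⟩
    · have := h1 i
      simp only [List.count_cons, beq_iff_eq, Finset.mem_erase] at this ⊢
      grind
    · rw [P3_cons, P3_cons]
      exact ⟨⟨h2, Or.inl hle⟩, Or.inl (by simpa using hle)⟩
    · rw [P4_cons, P4_cons]
      refine ⟨⟨h3, fun b _ => hn b⟩, fun b hb hs => ?_⟩
      rw [List.cons_sublist_cons'] at hs
      rcases hs with hs | ⟨h, _⟩
      · exact hn b hs
      · exact hb h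

theorem G_type2 {s : Finset α} {M m : α} (hM : IsGreatest (s : Set α) M)
    (hm : IsLeast (s.erase M : Set α) m) (u : List α) :
    G s (M :: m :: M :: u) ↔ G (s.erase M) (m :: u) := by
  have hMs : M ∈ s := hM.1
  have hm1 : m ≠ M := by have := hm.1; simp at this; exact this.2
  constructor
  · rintro ⟨h1, h2, h3⟩
    rw [P3_cons, P3_cons, P3_cons] at h2
    rw [P4_cons, P4_cons, P4_cons] at h3
    have hmu : ∀ a ∈ u, a ∈ s.erase M := by
      intro a ha
      have := h1 a
      have h0 := List.count_pos_iff.2 ha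
      simp only [List.count_cons, beq_iff_eq, Finset.mem_erase] at this ⊢
      grind
    refine ⟨fun i => ?_, ?_, ?_⟩
    · have := h1 i
      simp only [List.count_cons, beq_iff_eq, Finset.mem_erase] at this ⊢
      grind
    · rw [P3_cons]
      exact ⟨h2.1.1.1, Or.inr fun a ha => hm.2 (by simpa [and_comm] using hmu a ha)⟩
    · rw [P4_cons]
      exact ⟨h3.1.1.1, fun b hb hs => h3.1.2 b hb (hs.trans (List.sublist_cons_self _ _))⟩
  · intro h
    have hmem := G_mem h
    obtain ⟨h1, h2, h3⟩ := h
    have hMw : M ∉ m :: u := by rw [hmem]; simp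
    have hMu : M ∉ u := fun h => hMw (List.mem_cons_of_mem _ h)
    have hin : ∀ a ∈ u, a ∈ s.erase M := fun a ha => (hmem a).1 (List.mem_cons_of_mem _ ha)
    have hle : ∀ a ∈ u, a ≤ M := fun a ha => hM.2 (Finset.mem_of_mem_erase (hin a ha))
    have hge : ∀ a ∈ u, m ≤ a := fun a ha => hm.2 (by simpa [and_comm] using hin a ha)
    have hms : m ∈ s := by have := hm.1; simp at this; exact this.1
    have hmM : m ≤ M := hM.2 hms
    have hn : ∀ b, ¬ [b, b, M].Sublist u := fun b hs => hMu (hs.subset (by simp))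
    rw [P3_cons] at h2
    rw [P4_cons] at h3
    refine ⟨fun i => ?_, ?_, ?_⟩
    · have := h1 i
      simp only [List.count_cons, beq_iff_eq, Finset.mem_erase] at this ⊢
      grind
    · rw [P3_cons, P3_cons, P3_cons]
      refine ⟨⟨⟨h2.1, Or.inl hle⟩, Or.inr ?_⟩, Or.inl ?_⟩
      · simpa [hmM] using hge
      · simpa [hmM] using hle
    · rw [P4_cons, P4_cons, P4_cons]
      refine ⟨⟨⟨h3.1, fun b _ => hn b⟩, fun b hb hs => ?_⟩, fun b hb hs => ?_⟩
      · rw [List.cons_sublist_cons'] at hs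
        rcases hs with hs | ⟨rfl, hs⟩
        · exact h3.2 b hb hs
        · exact hMu (hs.subset (by simp))
      · rw [List.cons_sublist_cons', List.cons_sublist_cons', List.cons_sublist_cons'] at hs
        rcases hs with (hs | ⟨h, _⟩) | ⟨rfl, hs | ⟨h, _⟩⟩
        · exact hn b hs
        · exact hb h
        · exact hMu (hs.subset (by simp))
        · exact hb h

theorem G_shape {s : Finset α} {M m : α} (hM : IsGreatest (s : Set α) M)
    (hm : IsLeast (s.erase M : Set α) m) (v : List α) (h : G s (M :: v)) :
    (∃ u, v = M :: u) ∨ ∃ u, v = m :: M :: u := by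
  have hMs : M ∈ s := hM.1
  have hmem := G_mem h
  obtain ⟨h1, h2, h3⟩ := h
  match v, h1, h2, h3, hmem with
  | [], h1, _, _, _ => 
    have := h1 M
    simp [hMs] at this
  | c :: v, h1, h2, h3, hmem =>
    by_cases hc : c = M
    · exact Or.inl ⟨v, by rw [hc]⟩
    right
    have hcs : c ∈ s := (hmem c).1 (by simp)
    have hcM : c < M := lt_of_le_of_ne (hM.2 hcs) hc
    have hMv : M ∈ v := by
      have := h1 M
      rw [← List.count_pos_iff]
      simp only [List.count_cons, beq_iff_eq] at this
      grind
    have hcv : c ∈ v := by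
      have := h1 c
      rw [← List.count_pos_iff]
      simp only [List.count_cons, beq_iff_eq] at this
      grind
    rw [P3_cons, P3_cons] at h2
    rw [P4_cons, P4_cons] at h3
    have hcle : ∀ a ∈ v, c ≤ a := by
      rcases h2.1.2 with h | h
      · exact absurd (h M hMv) (not_le.2 hcM)
      · exact h
    have hcm : c = m := by
      apply le_antisymm
      · have hm1 := hm.1
        simp at hm1
        have : m ∈ M :: c :: v := (hmem m).2 hm1.1
        simp only [List.mem_cons] at this
        rcases this with h | h | h
        · exact absurd h hm1.2
        · exact h.ge
        · exact hcle m h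
      · exact hm.2 (by simp [hcs, hc])
    match v, h1, h2, h3, hmem, hMv, hcv, hcle with
    | d :: v, h1, h2, h3, hmem, hMv, hcv, hcle =>
      by_cases hd : d = M
      · exact ⟨v, by rw [hd, hcm]⟩
      exfalso
      have hMv' : M ∈ v := by
        simp only [List.mem_cons] at hMv
        rcases hMv with h | h
        · exact absurd h.symm hd
        · exact h
      have hdM : d < M := lt_of_le_of_ne (hM.2 ((hmem d).1 (by simp))) hd
      have hdc : d ≠ c := by
        rintro rfl
        exact h3.2 d hc (((List.singleton_sublist.2 hMv').cons_cons d).cons_cons d)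
      have hcv' : c ∈ v := by
        simp only [List.mem_cons] at hcv
        rcases hcv with h | h
        · exact absurd h.symm hdc
        · exact h
      rw [P3_cons] at h2
      rcases h2.1.1.2 with h | h
      · exact absurd (h M hMv') (not_le.2 hdM)
      · exact hdc (le_antisymm (h c hcv') (hcle d (by simp)))

/-- Good words starting with `x`. -/
def St (s : Finset α) (x : α) : Set (List α) := {w | G s w ∧ ∃ u, w = x :: u}

theorem St_max {s : Finset α} {M m : α} (hM : IsGreatest (s : Set α) M)
    (hm : IsLeast (s.erase M : Set α) m) :
    (St s M).encard = {w | G (s.erase M) w}.encard + (St (s.erase M) m).encard := by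
  have hm1 : m ≠ M := by have := hm.1; simp at this; exact this.2
  have e1 : {w | G (s.erase M) w}.encard =
      ((fun w => M :: M :: w) '' {w | G (s.erase M) w}).encard := by
    rw [Function.Injective.encard_image]
    intro a b h; simpa using h
  have e2 : (St (s.erase M) m).encard =
      ((fun u => M :: m :: M :: u) '' {u | G (s.erase M) (m :: u)}).encard := by
    rw [Function.Injective.encard_image]
    · have : St (s.erase M) m = (fun u => m :: u) '' {u | G (s.erase M) (m :: u)} := by
        ext w
        constructor
        · rintro ⟨h, u, rfl⟩; exact ⟨u, h, rfl⟩
        · rintro ⟨u, h, rfl⟩; exact ⟨h, u, rfl⟩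
      rw [this, Function.Injective.encard_image]
      intro a b h; simpa using h
    · intro a b h; simpa using h
  rw [e1, e2, ← Set.encard_union_eq]
  · congr 1
    ext w
    constructor
    · rintro ⟨h, v, rfl⟩
      rcases G_shape hM hm v h with ⟨u, rfl⟩ | ⟨u, rfl⟩
      · exact Or.inl ⟨u, (G_type1 hM u).1 h, rfl⟩
      · exact Or.inr ⟨u, (G_type2 hM hm u).1 h, rfl⟩
    · rintro (⟨u, h, rfl⟩ | ⟨u, h, rfl⟩)
      · exact ⟨(G_type1 hM u).2 h, _, rfl⟩
      · exact ⟨(G_type2 hM hm u).2 h, _, rfl⟩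
  · rw [Set.disjoint_left]
    rintro _ ⟨u, -, rfl⟩ ⟨v, -, h⟩
    simp at h
    exact hm1 h.1

theorem G_dual (s : Finset α) (w : List α) :
    G (α := αᵒᵈ) s w ↔ G (α := α) s w := by
  have h3 : P3 (α := αᵒᵈ) w ↔ P3 (α := α) w := by
    constructor
    · intro h a b c hs
      have := h a b c hs
      exact ⟨fun h => this.2 ⟨h.2, h.1⟩, fun h => this.1 ⟨h.2, h.1⟩⟩
    · intro h a b c hs
      have := h a b c hs
      exact ⟨fun h => this.2 ⟨h.2, h.1⟩, fun h => this.1 ⟨h.2, h.1⟩⟩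
  exact and_congr Iff.rfl (and_congr h3 Iff.rfl)

theorem St_dual (s : Finset α) (x : α) : St (α := αᵒᵈ) s x = St (α := α) s x := by
  ext w
  exact and_congr (G_dual s w) Iff.rfl

theorem all_eq {s : Finset α} {M m : α} (hM : IsGreatest (s : Set α) M)
    (hm : IsLeast (s : Set α) m) : {w | G s w} = St s M ∪ St s m := by
  ext w
  constructor
  · intro h
    have hmem := G_mem h
    match w, h, hmem with
    | [], h, hmem => exact absurd ((hmem M).2 hM.1) (by simp)
    | c :: w, h, hmem =>
      have hcs := (hmem c).1 (by simp)
      have h2 := h.2.1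
      rw [P3_cons] at h2
      have hMm := (hmem M).2 hM.1
      have hmm := (hmem m).2 hm.1
      simp only [List.mem_cons] at hMm hmm
      rcases h2.2 with h' | h'
      · left
        have : c = M := le_antisymm (hM.2 hcs) (by
          rcases hMm with e | e
          · exact e.le
          · exact h' M e)
        exact ⟨h, w, by rw [this]⟩
      · right
        have : c = m := le_antisymm (by
          rcases hmm with e | e
          · exact e.ge
          · exact h' m e) (hm.2 hcs)
        exact ⟨h, w, by rw [this]⟩
  · rintro (h | h) <;> exact h.1

theorem G_empty : {w : List α | G (∅ : Finset α) w} = {[]} := by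
  ext w
  simp only [Set.mem_ofPred_eq, Set.mem_singleton_iff]
  constructor
  · intro h
    have := G_mem h
    exact List.eq_nil_iff_forall_not_mem.2 fun a ha => by simpa using (this a).1 ha
  · rintro rfl
    refine ⟨by simp, ?_, ?_⟩
    · intro a b c h; simp at h
    · intro a b _ h; simp at h

theorem G_single (a : α) : {w : List α | G ({a} : Finset α) w} = {[a, a]} := by
  have hM : IsGreatest ((({a} : Finset α)) : Set α) a := by simp
  have he : ({a} : Finset α).erase a = ∅ := by simp
  ext w
  simp only [Set.mem_ofPred_eq, Set.mem_singleton_iff]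
  constructor
  · intro h
    have hl : w = List.replicate (w.count a) a := by
      rw [eq_comm, List.replicate_count_eq_of_count_eq_length]
      rw [List.count_eq_length]
      intro b hb
      have := (G_mem h b).1 hb
      simp at this
      exact this.symm
    rw [h.1 a] at hl
    simpa using hl
  · rintro rfl
    rw [G_type1 hM, he]
    have : ([] : List α) ∈ {w : List α | G (∅ : Finset α) w} := by rw [G_empty]; simp
    exact this

theorem all_card {s : Finset α} {M m : α} (hM : IsGreatest (s : Set α) M)
    (hm : IsLeast (s : Set α) m) (hne : m ≠ M) :
    {w | G s w}.encard = (St s M).encard + (St s m).encard := by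
  rw [all_eq hM hm, Set.encard_union_eq]
  rw [Set.disjoint_left]
  rintro _ ⟨_, u, rfl⟩ ⟨_, v, h⟩
  simp at h
  exact hne h.1.symm

theorem ne_of_card {s : Finset α} {M m : α} (hM : IsGreatest (s : Set α) M)
    (hm : IsLeast (s : Set α) m) (k : ℕ) (hs : s.card = k + 2) : m ≠ M := by
  rintro rfl
  have : s ⊆ {m} := fun x hx => by
    simp only [Finset.mem_singleton]
    exact le_antisymm (hM.2 hx) (hm.2 hx)
  have := Finset.card_le_card this
  simp at this
  omega

theorem exists_least (s : Finset α) (h : s.Nonempty) : ∃ m, IsLeast (s : Set α) m :=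
  ⟨s.min' h, s.isLeast_min' h⟩

theorem exists_greatest (s : Finset α) (h : s.Nonempty) : ∃ m, IsGreatest (s : Set α) m :=
  ⟨s.max' h, s.isGreatest_max' h⟩

theorem St_card (k : ℕ) : ∀ (α : Type) [LinearOrder α] (s : Finset α) (M : α),
    s.card = k + 2 → IsGreatest (s : Set α) M → (St s M).encard = 2 * 3 ^ k := by
  induction k with
  | zero =>
    intro α _ s M hs hM
    have hc : (s.erase M).card = 1 := by
      rw [Finset.card_erase_of_mem hM.1, hs]
    obtain ⟨m, hm⟩ := Finset.card_eq_one.1 hc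
    have hl : IsLeast (s.erase M : Set α) m := by
      rw [hm]; simp
    have hg := G_single m
    have : St ({m} : Finset α) m = {[m, m]} := by
      ext w
      have hw : G {m} w ↔ w = [m, m] := by
        have := Set.ext_iff.1 hg w
        simpa using this
      simp only [St, Set.mem_ofPred_eq, Set.mem_singleton_iff, hw]
      constructor
      · exact fun h => h.1
      · exact fun h => ⟨h, [m], h⟩
    rw [St_max hM hl, hm, hg, this]
    simp
    norm_num
  | succ k ih =>
    intro α _ s M hs hM
    have hc : (s.erase M).card = k + 2 := by
      rw [Finset.card_erase_of_mem hM.1, hs]; rfl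
    have hne : (s.erase M).Nonempty := Finset.card_pos.1 (by omega)
    obtain ⟨m, hm⟩ := exists_least _ hne
    obtain ⟨M', hM'⟩ := exists_greatest _ hne
    have h1 := ih α (s.erase M) M' hc hM'
    have h2 := ih αᵒᵈ (s.erase M) m hc hm
    replace h2 : (St (α := α) (s.erase M) m).encard = 2 * 3 ^ k := by
      rw [← h2]; exact congrArg Set.encard (St_dual (s.erase M) m).symm
    rw [St_max hM (by simpa using hm), all_card hM' hm (ne_of_card hM' hm k hc), h1, h2, pow_succ]
    ring

theorem G_card (s : Finset α) (k : ℕ) (hs : s.card = k + 2) :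
    {w | G s w}.encard = 4 * 3 ^ k := by
  have hne : s.Nonempty := Finset.card_pos.1 (by omega)
  obtain ⟨m, hm⟩ := exists_least _ hne
  obtain ⟨M, hM⟩ := exists_greatest _ hne
  have h1 := St_card k α s M hs hM
  have h2 := St_card k αᵒᵈ s m hs hm
  replace h2 : (St (α := α) s m).encard = 2 * 3 ^ k := by
    rw [← h2]; exact congrArg Set.encard (St_dual s m).symm
  rw [all_card hM hm (ne_of_card hM hm k hs), h1, h2]
  ring

theorem c132 (w : List ℕ) : Contains w [1,3,2] ↔
    ∃ a b c, [a, b, c].Sublist w ∧ a < c ∧ c < b := by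
  constructor
  · rintro ⟨t, ht, hl, h⟩
    obtain ⟨a, b, c, rfl⟩ := List.length_eq_three.1 hl
    have h1 := h 0 2 (by simp) (by simp)
    have h2 := h 2 1 (by simp) (by simp)
    simp at h1 h2
    exact ⟨a, b, c, ht, h1.1, h2.1⟩
  · rintro ⟨a, b, c, ht, h1, h2⟩
    refine ⟨_, ht, rfl, fun r s hr hs => ?_⟩
    simp at hr hs
    interval_cases r <;> interval_cases s <;> simp <;> omega

theorem c312 (w : List ℕ) : Contains w [3,1,2] ↔
    ∃ a b c, [a, b, c].Sublist w ∧ b < c ∧ c < a := by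
  constructor
  · rintro ⟨t, ht, hl, h⟩
    obtain ⟨a, b, c, rfl⟩ := List.length_eq_three.1 hl
    have h1 := h 1 2 (by simp) (by simp)
    have h2 := h 2 0 (by simp) (by simp)
    simp at h1 h2
    exact ⟨a, b, c, ht, h1.1, h2.1⟩
  · rintro ⟨a, b, c, ht, h1, h2⟩
    refine ⟨_, ht, rfl, fun r s hr hs => ?_⟩
    simp at hr hs
    interval_cases r <;> interval_cases s <;> simp <;> omega

theorem len4 (t : List ℕ) (h : t.length = 4) : ∃ a b c d, t = [a, b, c, d] := by
  match t, h with
  | [a, b, c, d], _ => exact ⟨a, b, c, d, rfl⟩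

theorem c1221 (w : List ℕ) : Contains w [1,2,2,1] ↔
    ∃ a b, [a, b, b, a].Sublist w ∧ a < b := by
  constructor
  · rintro ⟨t, ht, hl, h⟩
    obtain ⟨a, b, c, d, rfl⟩ := len4 t hl
    have h1 := h 0 1 (by simp) (by simp)
    have h2 := h 1 2 (by simp) (by simp)
    have h3 := h 0 3 (by simp) (by simp)
    simp at h1 h2 h3
    obtain ⟨-, rfl⟩ := h2
    obtain ⟨-, rfl⟩ := h3
    exact ⟨a, b, ht, h1.1⟩
  · rintro ⟨a, b, ht, h1⟩
    refine ⟨_, ht, rfl, fun r s hr hs => ?_⟩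
    simp at hr hs
    interval_cases r <;> interval_cases s <;> simp <;> omega

theorem c2112 (w : List ℕ) : Contains w [2,1,1,2] ↔
    ∃ a b, [a, b, b, a].Sublist w ∧ b < a := by
  constructor
  · rintro ⟨t, ht, hl, h⟩
    obtain ⟨a, b, c, d, rfl⟩ := len4 t hl
    have h1 := h 1 0 (by simp) (by simp)
    have h2 := h 1 2 (by simp) (by simp)
    have h3 := h 0 3 (by simp) (by simp)
    simp at h1 h2 h3
    obtain ⟨-, rfl⟩ := h2
    obtain ⟨-, rfl⟩ := h3
    exact ⟨a, b, ht, h1.1⟩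
  · rintro ⟨a, b, ht, h1⟩
    refine ⟨_, ht, rfl, fun r s hr hs => ?_⟩
    simp at hr hs
    interval_cases r <;> interval_cases s <;> simp <;> omega

theorem bridge (n : ℕ) (w : List ℕ) :
    (IsNonnesting n w ∧ Avoids w [1,3,2] ∧ Avoids w [3,1,2]) ↔
      G (Finset.Icc 1 n) w.reverse := by
  have r3 : ∀ a b c : ℕ, [c, b, a].Sublist w.reverse ↔ [a, b, c].Sublist w := fun a b c => by
    rw [← List.reverse_sublist]; simp
  have r4 : ∀ a b : ℕ, [a, b, b, a].Sublist w.reverse ↔ [a, b, b, a].Sublist w := fun a b => by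
    rw [← List.reverse_sublist]; simp
  unfold IsNonnesting IsMultisetPerm Avoids G P3 P4
  rw [c132, c312, c1221, c2112]
  simp only [r3, r4, List.count_reverse, Finset.mem_Icc]
  constructor
  · rintro ⟨⟨h1, h2, h3⟩, h4, h5⟩
    refine ⟨h1, fun a b c hs => ⟨fun h => h4 ⟨a, b, c, hs, h⟩, fun h => h5 ⟨a, b, c, hs, h⟩⟩, ?_⟩
    intro a b hab hs
    rcases lt_or_gt_of_ne hab with h | h
    · exact h2 ⟨a, b, hs, h⟩
    · exact h3 ⟨a, b, hs, h⟩
  · rintro ⟨h1, h2, h3⟩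
    refine ⟨⟨h1, ?_, ?_⟩, ?_, ?_⟩
    · rintro ⟨a, b, hs, h⟩; exact h3 a b h.ne hs
    · rintro ⟨a, b, hs, h⟩; exact h3 a b h.ne' hs
    · rintro ⟨a, b, c, hs, h⟩; exact (h2 a b c hs).1 h
    · rintro ⟨a, b, c, hs, h⟩; exact (h2 a b c hs).2 h

end NN

theorem nonnesting_avoid_132_312 (n : ℕ) (hn : 2 ≤ n) :
    {w : List ℕ | IsNonnesting n w ∧ Avoids w [1,3,2] ∧ Avoids w [3,1,2]}.ncard =
      4 * 3 ^ (n - 2) := by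
  have he : {w : List ℕ | IsNonnesting n w ∧ Avoids w [1,3,2] ∧ Avoids w [3,1,2]} =
      List.reverse '' {w | NN.G (Finset.Icc 1 n) w} := by
    ext w
    simp only [Set.mem_ofPred_eq, NN.bridge, Set.mem_image]
    constructor
    · exact fun h => ⟨_, h, List.reverse_reverse w⟩
    · rintro ⟨v, h, rfl⟩
      rwa [List.reverse_reverse]
  have hc := NN.G_card (Finset.Icc 1 n) (n - 2) (by simp; omega)
  rw [he, Set.ncard, List.reverse_injective.encard_image, hc]
  have : (4 * 3 ^ (n - 2) : ℕ∞) = ((4 * 3 ^ (n - 2) : ℕ) : ℕ∞) := by push_cast; rfl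
  rw [this, ENat.toNat_natCast]
end

section
/- For all n ≥ 2, the number of nonnesting permutations of the multiset {1,1,2,2,…,n,n} that avoid both patterns 123 and 213 equals 4·3^(n−2). -/
set_option linter.unusedSimpArgs false

/-- The reformulated avoidance conditions. -/
def GoodW (w : List ℕ) : Prop :=
  (∀ a b, a < b → ¬ [a, b, b, a].Sublist w) ∧ (∀ a b, a < b → ¬ [b, a, a, b].Sublist w) ∧
  (∀ a b c, a < b → b < c → ¬ [a, b, c].Sublist w) ∧
  (∀ a b c, a < b → b < c → ¬ [b, a, c].Sublist w)

lemma avoids_1221 (w : List ℕ) :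
    Avoids w [1,2,2,1] ↔ ∀ a b, a < b → ¬ [a, b, b, a].Sublist w := by
  constructor
  · intro h a b hab hs
    refine h ⟨_, hs, rfl, ?_⟩
    intro r s hr hs
    simp only [List.length_cons, List.length_nil] at hr hs
    interval_cases r <;> interval_cases s <;> simp <;> omega
  · rintro h ⟨t, hs, hl, ht⟩
    match t, hl with
    | [a, b, c, d], _ =>
      have h1 := ht 0 1 (by simp) (by simp)
      have h2 := ht 1 2 (by simp) (by simp)
      have h3 := ht 0 3 (by simp) (by simp)
      simp at h1 h2 h3
      obtain ⟨-, rfl⟩ := h2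
      obtain ⟨-, rfl⟩ := h3
      exact h _ _ h1.1 hs

lemma avoids_2112 (w : List ℕ) :
    Avoids w [2,1,1,2] ↔ ∀ a b, a < b → ¬ [b, a, a, b].Sublist w := by
  constructor
  · intro h a b hab hs
    refine h ⟨_, hs, rfl, ?_⟩
    intro r s hr hs
    simp only [List.length_cons, List.length_nil] at hr hs
    interval_cases r <;> interval_cases s <;> simp <;> omega
  · rintro h ⟨t, hs, hl, ht⟩
    match t, hl with
    | [a, b, c, d], _ =>
      have h1 := ht 1 0 (by simp) (by simp)
      have h2 := ht 1 2 (by simp) (by simp)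
      have h3 := ht 0 3 (by simp) (by simp)
      simp at h1 h2 h3
      obtain ⟨-, rfl⟩ := h2
      obtain ⟨-, rfl⟩ := h3
      exact h _ _ h1.1 hs

lemma avoids_123 (w : List ℕ) :
    Avoids w [1,2,3] ↔ ∀ a b c, a < b → b < c → ¬ [a, b, c].Sublist w := by
  constructor
  · intro h a b c hab hbc hs
    refine h ⟨_, hs, rfl, ?_⟩
    intro r s hr hs
    simp only [List.length_cons, List.length_nil] at hr hs
    interval_cases r <;> interval_cases s <;> simp <;> omega
  · rintro h ⟨t, hs, hl, ht⟩
    match t, hl with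
    | [a, b, c], _ =>
      have h1 := ht 0 1 (by simp) (by simp)
      have h2 := ht 1 2 (by simp) (by simp)
      simp at h1 h2
      exact h _ _ _ h1.1 h2.1 hs

lemma avoids_213 (w : List ℕ) :
    Avoids w [2,1,3] ↔ ∀ a b c, a < b → b < c → ¬ [b, a, c].Sublist w := by
  constructor
  · intro h a b c hab hbc hs
    refine h ⟨_, hs, rfl, ?_⟩
    intro r s hr hs
    simp only [List.length_cons, List.length_nil] at hr hs
    interval_cases r <;> interval_cases s <;> simp <;> omega
  · rintro h ⟨t, hs, hl, ht⟩
    match t, hl with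
    | [a, b, c], _ =>
      have h1 := ht 1 0 (by simp) (by simp)
      have h2 := ht 0 2 (by simp) (by simp)
      simp at h1 h2
      exact h _ _ _ h1.1 h2.1 hs

/-- Conditions on the position of the largest value `N`. -/
def TopOK (N : ℕ) (w : List ℕ) : Prop :=
  (∀ a, a ≠ N → ¬ [a, N, N, a].Sublist w) ∧ (∀ a, a ≠ N → ¬ [N, a, a, N].Sublist w) ∧
  (∀ a b, a ≠ N → b ≠ N → a ≠ b → ¬ [a, b, N].Sublist w)

/-- Remove the value `N`. -/
def del (N : ℕ) (w : List ℕ) : List ℕ := w.filter (fun x => decide (x ≠ N))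

lemma sub_del {N : ℕ} {s w : List ℕ} (h : N ∉ s) : s.Sublist (del N w) ↔ s.Sublist w := by
  constructor
  · exact fun h => h.trans List.filter_sublist
  · intro hs
    have := hs.filter (fun x => decide (x ≠ N))
    rwa [List.filter_eq_self.2] at this
    intro a ha
    simp
    rintro rfl
    exact h ha

lemma perm_le {n : ℕ} {w : List ℕ} (h : IsMultisetPerm n w) {x : ℕ} (hx : x ∈ w) :
    1 ≤ x ∧ x ≤ n := by
  have := h x
  have := List.count_pos_iff.2 hx
  by_contra hc
  simp_all

lemma good_succ (n : ℕ) (w : List ℕ) :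
    (IsMultisetPerm (n+1) w ∧ GoodW w) ↔
    (w.count (n+1) = 2 ∧ (IsMultisetPerm n (del (n+1) w) ∧ GoodW (del (n+1) w)) ∧
      TopOK (n+1) w) := by
  have hdel : IsMultisetPerm (n+1) w ↔ w.count (n+1) = 2 ∧ IsMultisetPerm n (del (n+1) w) := by
    have hc : ∀ i, i ≠ n+1 → (del (n+1) w).count i = w.count i := by
      intro i hi
      exact List.count_filter (by simpa using hi)
    have hc' : (del (n+1) w).count (n+1) = 0 := by
      rw [List.count_eq_zero]; simp [del]
    constructor
    · intro h
      refine ⟨by simpa using h (n+1), fun i => ?_⟩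
      by_cases hi : i = n+1
      · subst hi; rw [hc']; simp
      · rw [hc i hi, h i]
        congr 1
        simp; omega
    · rintro ⟨h1, h2⟩ i
      by_cases hi : i = n+1
      · subst hi; rw [h1]; simp
      · rw [← hc i hi, h2 i]
        congr 1
        simp; omega
  constructor
  · rintro ⟨hp, g1, g2, g3, g4⟩
    obtain ⟨h1, h2⟩ := hdel.1 hp
    refine ⟨h1, ⟨h2, ?_, ?_, ?_, ?_⟩, ?_, ?_, ?_⟩
    · exact fun a b hab hs => g1 a b hab (hs.trans List.filter_sublist)
    · exact fun a b hab hs => g2 a b hab (hs.trans List.filter_sublist)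
    · exact fun a b c hab hbc hs => g3 a b c hab hbc (hs.trans List.filter_sublist)
    · exact fun a b c hab hbc hs => g4 a b c hab hbc (hs.trans List.filter_sublist)
    · intro a ha hs
      have := perm_le hp (hs.subset (by simp : a ∈ _))
      exact g1 a _ (by omega) hs
    · intro a ha hs
      have := perm_le hp (hs.subset (by simp : a ∈ _))
      exact g2 a _ (by omega) hs
    · intro a b ha hb hab hs
      have := perm_le hp (hs.subset (by simp : a ∈ _))
      have := perm_le hp (hs.subset (by simp : b ∈ _))
      rcases lt_or_gt_of_ne hab with h | h
      · exact g3 a b _ h (by omega) hs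
      · exact g4 b a _ h (by omega) hs
  · rintro ⟨h1, ⟨h2, g1, g2, g3, g4⟩, t1, t2, t3⟩
    have hp := hdel.2 ⟨h1, h2⟩
    refine ⟨hp, ?_, ?_, ?_, ?_⟩
    · intro a b hab hs
      have := perm_le hp (hs.subset (by simp : b ∈ _))
      by_cases hb : b = n+1
      · subst hb; exact t1 a (by omega) hs
      · exact g1 a b hab ((sub_del (by simp; omega)).2 hs)
    · intro a b hab hs
      have := perm_le hp (hs.subset (by simp : b ∈ _))
      by_cases hb : b = n+1
      · subst hb; exact t2 a (by omega) hs
      · exact g2 a b hab ((sub_del (by simp; omega)).2 hs)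
    · intro a b c hab hbc hs
      have := perm_le hp (hs.subset (by simp : c ∈ _))
      by_cases hb : c = n+1
      · subst hb; exact t3 a b (by omega) (by omega) (by omega) hs
      · exact g3 a b c hab hbc ((sub_del (by simp; omega)).2 hs)
    · intro a b c hab hbc hs
      have := perm_le hp (hs.subset (by simp : c ∈ _))
      by_cases hb : c = n+1
      · subst hb; exact t3 b a (by omega) (by omega) (by omega) hs
      · exact g4 a b c hab hbc ((sub_del (by simp; omega)).2 hs)

/-- All ways of inserting the new maximal value. -/
def gen (N : ℕ) : List ℕ → Finset (List ℕ)
  | a :: b :: t =>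
    if a = b then {N :: N :: a :: b :: t, N :: a :: N :: b :: t, a :: a :: N :: N :: t,
      a :: N :: a :: N :: t}
    else {N :: N :: a :: b :: t, N :: a :: N :: b :: t}
  | _ => ∅

/-- The word starts with a repeated letter. -/
def Dbl : List ℕ → Bool
  | a :: b :: _ => a == b
  | _ => false

lemma gen_sound (N : ℕ) (v w : List ℕ) (hv : N ∉ v) (h2 : ∀ a ∈ v, v.count a = 2)
    (h : w ∈ gen N v) :
    w.count N = 2 ∧ del N w = v ∧ TopOK N w := by
  match v with
  | [] => simp [gen] at h
  | [a] => simp [gen] at h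
  | a :: b :: t =>
    simp at hv
    obtain ⟨hv1, hv2, hv3⟩ := hv
    have ht : List.count N t = 0 := List.count_eq_zero.2 hv3
    have hf : t.filter (fun x => decide (x ≠ N)) = t := by
      rw [List.filter_eq_self]
      intro x hx; simp; rintro rfl; exact hv3 hx
    have nt : ∀ l : List ℕ, N ∈ l → ¬ l.Sublist t := fun l hl hs => hv3 (hs.subset hl)
    have hat : a = b → a ∉ t := by
      rintro rfl hm
      have := h2 a (by simp)
      simp at this
      exact absurd hm (List.count_eq_zero.1 this)
    by_cases hab : a = b
    · subst hab
      have hat := hat rfl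
      have nt2 : ∀ l : List ℕ, a ∈ l → ¬ l.Sublist t := fun l hl hs => hat (hs.subset hl)
      simp [gen] at h
      rcases h with rfl | rfl | rfl | rfl
      all_goals
        refine ⟨by simp [List.count_cons, ht, Ne.symm hv1, hv1],
          by simp [del, Ne.symm hv1, hv1]; simpa using hf, ?_, ?_, ?_⟩
        · intro x hx hs
          simp [List.cons_sublist_cons', nt, nt2, hx, Ne.symm hx, hv1, Ne.symm hv1] at hs
          try grind
        · intro x hx hs
          simp [List.cons_sublist_cons', nt, nt2, hx, Ne.symm hx, hv1, Ne.symm hv1] at hs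
          try grind
        · intro x y hx hy hxy hs
          simp [List.cons_sublist_cons', nt, nt2, hx, Ne.symm hx, hy, hv1, Ne.symm hv1] at hs
          try grind
    · simp [gen, hab] at h
      rcases h with rfl | rfl
      all_goals
        refine ⟨by simp [List.count_cons, ht, Ne.symm hv1, hv1, Ne.symm hv2],
          by simp [del, Ne.symm hv1, hv1, Ne.symm hv2]; simpa using hf, ?_, ?_, ?_⟩
        · intro x hx hs
          simp [List.cons_sublist_cons', nt, hx, Ne.symm hx, hv1, Ne.symm hv1, hv2] at hs
          try grind
        · intro x hx hs
          simp [List.cons_sublist_cons', nt, hx, Ne.symm hx, hv1, Ne.symm hv1, hv2] at hs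
          try grind
        · intro x y hx hy hxy hs
          simp [List.cons_sublist_cons', nt, hx, Ne.symm hx, hy, hv1, Ne.symm hv1, hv2] at hs
          try grind

lemma split_two (N : ℕ) (w : List ℕ) (h : w.count N = 2) :
    ∃ u₁ u₂ t, w = u₁ ++ N :: (u₂ ++ N :: t) ∧ N ∉ u₁ ∧ N ∉ u₂ ∧ N ∉ t := by
  have h1 : N ∈ w := List.count_pos_iff.1 (by omega)
  obtain ⟨u₁, s, rfl, hu⟩ := List.eq_append_cons_of_mem h1
  have hs : s.count N = 1 := by
    have := List.count_eq_zero.2 hu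
    simp [List.count_append, this] at h
    exact h
  have h2 : N ∈ s := List.count_pos_iff.1 (by omega)
  obtain ⟨u₂, t, rfl, hu2⟩ := List.eq_append_cons_of_mem h2
  refine ⟨u₁, u₂, t, rfl, hu, hu2, ?_⟩
  have := List.count_eq_zero.2 hu2
  simp [List.count_append, this] at hs
  exact List.count_eq_zero.1 hs

lemma del_self {N : ℕ} {t : List ℕ} (h : N ∉ t) :
    t.filter (fun x => decide (x ≠ N)) = t := by
  rw [List.filter_eq_self]
  intro x hx; simp; rintro rfl; exact h hx

lemma gen_complete (N : ℕ) (w : List ℕ) (hne : del N w ≠ [])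
    (h2 : ∀ a ∈ del N w, (del N w).count a = 2)
    (hc : w.count N = 2) (ht : TopOK N w) : w ∈ gen N (del N w) := by
  obtain ⟨u₁, u₂, t, rfl, n1, n2, n3⟩ := split_two N w hc
  obtain ⟨t1, t2, t3⟩ := ht
  have hd : del N (u₁ ++ N :: (u₂ ++ N :: t)) = u₁ ++ (u₂ ++ t) := by
    simp only [del, List.filter_append, List.filter_cons, del_self n1, del_self n2, del_self n3]
    simp
  rw [hd] at hne h2 ⊢
  have hsub : ∀ x y, [x, y].Sublist (u₁ ++ u₂) → x = y := by
    intro x y hs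
    have hx : x ∈ u₁ ++ u₂ := hs.subset (by simp)
    have hy : y ∈ u₁ ++ u₂ := hs.subset (by simp)
    by_contra hxy
    refine t3 x y ?_ ?_ hxy ?_
    · rintro rfl; simp_all
    · rintro rfl; simp_all
    · have e : [x, y, N] = [x, y] ++ [N] := rfl
      rw [e]
      have e2 : u₁ ++ N :: (u₂ ++ N :: t) = (u₁ ++ N :: u₂) ++ N :: t := by simp
      rw [e2]
      refine List.Sublist.append (hs.trans ?_) (by simp)
      exact List.Sublist.append (List.Sublist.refl _) (by simp)
  match u₁, u₂ with
  | [], [] =>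
    match t with
    | [] => simp at hne
    | [a] => have := h2 a (by simp); simp at this
    | a :: b :: t => simp only [gen, List.nil_append]; split_ifs <;> simp
  | [], [a] =>
    match t with
    | [] => have := h2 a (by simp); simp at this
    | b :: t => simp only [gen, List.nil_append, List.cons_append]; split_ifs <;> simp
  | [a], [] =>
    exfalso
    have := h2 a (by simp)
    simp at this
    simp at n1
    refine t1 a (Ne.symm n1) ?_
    have hm : a ∈ t := List.count_pos_iff.1 (by omega)
    simpa using hm
  | [a], [b] =>
    obtain rfl := hsub a b (by simp)
    simp [gen]
  | [a, b], [] =>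
    obtain rfl := hsub a b (by simp)
    simp [gen]
  | [], [a, b] =>
    exfalso
    obtain rfl := hsub a b (by simp)
    simp at n2
    refine t2 a (Ne.symm n2) ?_
    simp
  | a :: b :: c :: u, v =>
    exfalso
    obtain rfl := hsub a b (by simp)
    obtain rfl := hsub a c (by simp)
    have := h2 a (by simp)
    simp at this
  | [a, b], c :: v =>
    exfalso
    obtain rfl := hsub a b (by simp)
    obtain rfl := hsub a c (by simp)
    have := h2 a (by simp)
    simp at this
  | [a], b :: c :: v =>
    exfalso
    obtain rfl := hsub a b (by simp)
    obtain rfl := hsub a c (by simp)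
    have := h2 a (by simp)
    simp at this
  | [], a :: b :: c :: v =>
    exfalso
    obtain rfl := hsub a b (by simp)
    obtain rfl := hsub a c (by simp)
    have := h2 a (by simp)
    simp at this

/-- The words for `n + 1`. -/
def FF : ℕ → Finset (List ℕ)
  | 0 => {[1, 1]}
  | n + 1 => (FF n).biUnion (gen (n + 2))

lemma perm_two {n : ℕ} {w : List ℕ} (h : IsMultisetPerm n w) : ∀ a ∈ w, w.count a = 2 := by
  intro a ha
  rw [h a, if_pos (perm_le h ha)]

lemma mem_FF (n : ℕ) : ∀ w, w ∈ FF n ↔ (IsMultisetPerm (n+1) w ∧ GoodW w) := by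
  induction n with
  | zero =>
    intro w
    simp only [FF, Finset.mem_singleton]
    constructor
    · rintro rfl
      refine ⟨?_, ?_, ?_, ?_, ?_⟩
      · intro i
        by_cases hi : i = 1
        · subst hi; simp
        · rw [if_neg (by omega), List.count_eq_zero]; simp [hi]
      · intro a b hab hs; simpa using hs.length_le
      · intro a b hab hs; simpa using hs.length_le
      · intro a b c hab hbc hs; simpa using hs.length_le
      · intro a b c hab hbc hs; simpa using hs.length_le
    · rintro ⟨h, -⟩
      have h1 : ∀ x ∈ w, x = 1 := fun x hx => by have := perm_le h hx; omega
      have hr := List.eq_replicate_of_mem h1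
      have h3 := h 1
      rw [hr] at h3 ⊢
      simp at h3
      rw [h3]; rfl
  | succ n ih =>
    intro w
    rw [good_succ]
    simp only [FF, Finset.mem_biUnion]
    constructor
    · rintro ⟨v, hv, hw⟩
      have hv' := (ih v).1 hv
      obtain ⟨a, b, c⟩ := gen_sound (n+2) v w
        (fun hm => by have := perm_le hv'.1 hm; omega) (perm_two hv'.1) hw
      refine ⟨a, ?_, c⟩
      rw [b]; exact hv'
    · rintro ⟨a, b, c⟩
      refine ⟨_, (ih _).2 b, gen_complete _ _ ?_ (perm_two b.1) a c⟩
      intro h0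
      have := b.1 1
      rw [h0] at this
      simp at this

lemma FF_disj (n : ℕ) : (↑(FF n) : Set (List ℕ)).PairwiseDisjoint (gen (n+2)) := by
  have key : ∀ v ∈ FF n, ∀ w ∈ gen (n+2) v, del (n+2) w = v := by
    intro v hv w hw
    have hv' := (mem_FF n v).1 hv
    exact (gen_sound (n+2) v w
        (fun hm => by have := perm_le hv'.1 hm; omega) (perm_two hv'.1) hw).2.1
  intro v hv v' hv' hne
  refine Finset.disjoint_left.2 fun w hw hw' => hne ?_
  rw [← key v hv w hw, key v' hv' w hw']

lemma gen_card (n : ℕ) (v : List ℕ) (hv : v ∈ FF n) :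
    (gen (n+2) v).card = 2 + 2 * (if Dbl v = true then 1 else 0) ∧
    ((gen (n+2) v).filter (fun w => Dbl w = true)).card = 1 + (if Dbl v = true then 1 else 0) := by
  have hv' := ((mem_FF n v).1 hv).1
  match v with
  | [] => have := hv' 1; simp at this
  | [a] => have := perm_two hv' a (by simp); simp at this
  | a :: b :: t =>
    have ha : a ≠ n + 2 := fun h => by have := perm_le hv' (by simp : a ∈ _); omega
    have hb : b ≠ n + 2 := fun h => by have := perm_le hv' (by simp : b ∈ _); omega
    by_cases hab : a = b
    · subst hab
      simp [gen, Dbl, Finset.filter_insert, Finset.filter_singleton, ha, Ne.symm ha,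
        Finset.card_insert_of_notMem]
    · simp [gen, Dbl, hab, Finset.filter_insert, Finset.filter_singleton, ha, Ne.symm ha,
        Finset.card_insert_of_notMem]

lemma FF_rec (n : ℕ) :
    (FF (n+1)).card = 2 * (FF n).card + 2 * ((FF n).filter (fun w => Dbl w = true)).card ∧
    ((FF (n+1)).filter (fun w => Dbl w = true)).card =
      (FF n).card + ((FF n).filter (fun w => Dbl w = true)).card := by
  constructor
  · rw [FF, Finset.card_biUnion (FF_disj n), Finset.sum_congr rfl fun v hv => (gen_card n v hv).1,
      Finset.sum_add_distrib, ← Finset.mul_sum, Finset.card_filter]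
    simp [mul_comm]
  · rw [FF, Finset.filter_biUnion, Finset.card_biUnion,
      Finset.sum_congr rfl fun v hv => (gen_card n v hv).2,
      Finset.sum_add_distrib, Finset.card_filter]
    · simp
    · intro v hv v' hv' hne
      exact (FF_disj n hv hv' hne).mono (Finset.filter_subset _ _) (Finset.filter_subset _ _)

lemma FF_count (n : ℕ) : (FF (n+1)).card = 4 * 3 ^ n ∧
    ((FF (n+1)).filter (fun w => Dbl w = true)).card = 2 * 3 ^ n := by
  induction n with
  | zero =>
    obtain ⟨h1, h2⟩ := FF_rec 0
    rw [h1, h2]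
    decide
  | succ n ih =>
    obtain ⟨h1, h2⟩ := FF_rec (n+1)
    rw [h1, h2, ih.1, ih.2]
    constructor <;> ring

theorem nonnesting_avoid_123_213 (n : ℕ) (hn : 2 ≤ n) :
    {w : List ℕ | IsNonnesting n w ∧ Avoids w [1,2,3] ∧ Avoids w [2,1,3]}.ncard =
      4 * 3 ^ (n - 2) := by
  obtain ⟨m, rfl⟩ := Nat.exists_eq_add_of_le' hn
  have : {w : List ℕ | IsNonnesting (m+2) w ∧ Avoids w [1,2,3] ∧ Avoids w [2,1,3]} =
      ↑(FF (m+1)) := by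
    ext w
    simp only [Set.mem_setOf_eq, Finset.mem_coe]
    rw [mem_FF, IsNonnesting, avoids_123, avoids_213, avoids_1221, avoids_2112, GoodW]
    tauto
  rw [this, Set.ncard_coe_finset, (FF_count m).1]
  simp
end

section
/- Let Σ be a set of permutations of {1,2,3} (patterns of length 3), and let Λ = {σ₁σ₂σ₂σ₃ : σ = σ₁σ₂σ₃ ∈ Σ} be the set of length-4 patterns obtained by duplicating the middle letter of each pattern in Σ. Then for all n ≥ 1, the number of nonnesting permutations of the multiset {1,1,2,2,…,n,n} avoiding every pattern in Λ equals s_n(Σ)·C_n, where s_n(Σ) is the number of permutations of {1,…,n} avoiding every pattern in Σ and C_n = binom(2n,n)/(n+1) is the nth Catalan number. -/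
/-- `p` is a permutation (word) of `{1,…,n}`: every value in `{1,…,n}`
occurs exactly once and no other value occurs. -/
def IsPermWord (n : ℕ) (p : List ℕ) : Prop :=
  ∀ i : ℕ, p.count i = if 1 ≤ i ∧ i ≤ n then 1 else 0

open DyckStep in
/-- Queue process: `B Q p d w` says that, starting from the queue `Q`, the steps `d` read
the word `w`, where the letters of `p` are pushed in order at the up-steps, and
the down-steps pop the front of the queue. -/
inductive B : List ℕ → List ℕ → List DyckStep → List ℕ → Prop
  | nil : B [] [] [] []
  | up (Q p d w x) : B (Q ++ [x]) p d w → B Q (x :: p) (U :: d) (x :: w)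
  | dn (Q p d w y) : B Q p d w → B (y :: Q) p (D :: d) (y :: w)

theorem B.count {Q p d w} (h : B Q p d w) (x : ℕ) :
    w.count x = Q.count x + p.count x + p.count x := by
  induction h with
  | nil => simp
  | up Q p d w y h ih => simp [List.count_cons] at *; split_ifs at * <;> omega
  | dn Q p d w y h ih => simp [List.count_cons] at *; split_ifs at * <;> omega

theorem B.mem {Q p d w} (h : B Q p d w) (x : ℕ) : x ∈ w ↔ x ∈ Q ++ p := by
  have := h.count x
  rw [← List.count_pos_iff, ← List.count_pos_iff, List.count_append]
  omega

theorem B.countU {Q p d w} (h : B Q p d w) : d.count DyckStep.U = p.length := by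
  induction h <;> simp_all

theorem B.countD {Q p d w} (h : B Q p d w) :
    d.count DyckStep.D = Q.length + p.length := by
  induction h <;> simp_all <;> omega

theorem B.take {Q p d w} (h : B Q p d w) (i : ℕ) :
    (d.take i).count DyckStep.D ≤ (d.take i).count DyckStep.U + Q.length := by
  induction h generalizing i with
  | nil => simp
  | up Q p d w y h ih =>
    cases i with
    | zero => simp
    | succ i => have := ih i; simp at *; omega
  | dn Q p d w y h ih =>
    cases i with
    | zero => simp
    | succ i => have := ih i; simp at *; omega

theorem B.exists {d : List DyckStep} : ∀ {Q p : List ℕ}, d.count DyckStep.U = p.length →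
    d.count DyckStep.D = Q.length + p.length →
    (∀ i, (d.take i).count DyckStep.D ≤ (d.take i).count DyckStep.U + Q.length) →
    ∃ w, B Q p d w := by
  induction d with
  | nil =>
    intro Q p h1 h2 _
    simp at h1 h2
    obtain rfl : p = [] := List.length_eq_zero_iff.1 (by omega)
    obtain rfl : Q = [] := List.length_eq_zero_iff.1 (by omega)
    exact ⟨[], B.nil⟩
  | cons s d ih =>
    intro Q p h1 h2 h3
    cases s with
    | U =>
      cases p with
      | nil => simp at h1
      | cons x p =>
        obtain ⟨w, hw⟩ := ih (Q := Q ++ [x]) (p := p) (by simpa using h1)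
          (by simp at h2 ⊢; omega) (fun i => by have := h3 (i+1); simp at this ⊢; omega)
        exact ⟨_, B.up _ _ _ _ _ hw⟩
    | D =>
      cases Q with
      | nil => have := h3 1; simp at this
      | cons y Q =>
        obtain ⟨w, hw⟩ := ih (Q := Q) (p := p) (by simpa using h1)
          (by simp at h2 ⊢; omega) (fun i => by have := h3 (i+1); simp at this ⊢; omega)
        exact ⟨_, B.dn _ _ _ _ _ hw⟩

theorem B.inj {Q p d w} (h : B Q p d w) : ∀ {p' d'}, B Q p' d' w → (Q ++ p).Nodup →
    (Q ++ p').Nodup → p = p' ∧ d = d' := by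
  induction h with
  | nil => intro p' d' h; cases h; simp
  | up Q p d w x h ih =>
    intro p' d' h' n1 n2
    cases h' with
    | up _ p' d' _ _ h' =>
      have := ih h' (by simpa using n1) (by simpa using n2)
      simp [this]
    | dn Q => simp at n1
  | dn Q p d w x h ih =>
    intro p' d' h' n1 n2
    cases h' with
    | up _ p' d' _ _ h' => simp at n2
    | dn _ _ d' _ _ h' =>
      have := ih h' (List.nodup_cons.1 n1).2 (List.nodup_cons.1 n2).2
      simp [this]

theorem B.uniq {Q p d w} (h : B Q p d w) : ∀ {w'}, B Q p d w' → w = w' := by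
  induction h with
  | nil => intro w' h; cases h; rfl
  | up Q p d w x h ih => intro w' h'; cases h' with | up _ _ _ _ _ h' => rw [ih h']
  | dn Q p d w x h ih => intro w' h'; cases h' with | dn _ _ _ _ _ h' => rw [ih h']

theorem B.surj (w : List ℕ) : ∀ Q : List ℕ, Q.Nodup →
    (∀ x, (Q ++ w).count x = 0 ∨ (Q ++ w).count x = 2) →
    (∀ a b, a ≠ b → ¬ [a,b,b,a].Sublist (Q ++ w)) → ∃ p d, B Q p d w := by
  induction w with
  | nil =>
    intro Q hQ hc _
    cases Q with
    | nil => exact ⟨_, _, B.nil⟩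
    | cons y Q =>
      have := hc y
      have h2 := List.nodup_iff_count_le_one.1 hQ y
      simp at this h2
      omega
  | cons x w ih =>
    intro Q hQ hc hn
    by_cases hx : x ∈ Q
    · cases Q with
      | nil => simp at hx
      | cons y Q =>
        have hQ' := List.nodup_cons.1 hQ
        by_cases hxy : x = y
        · subst hxy
          obtain ⟨p, d, h⟩ := ih Q hQ'.2 (by
            intro z
            have h0 : Q.count x = 0 := List.count_eq_zero.2 hQ'.1
            have := hc z
            simp [List.count_cons] at this ⊢
            by_cases hz : x = z
            · subst hz; simp at this; omega
            · simpa [hz] using this) (by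
            intro a b hab hs
            refine hn a b hab (hs.trans ?_)
            exact ((List.Sublist.refl Q).append (List.sublist_cons_self x w)).trans
              (List.sublist_cons_self _ _))
          exact ⟨_, _, B.dn _ _ _ _ _ h⟩
        · exfalso
          have hxQ : x ∈ Q := by simpa [hxy] using hx
          have h0 : Q.count y = 0 := List.count_eq_zero.2 hQ'.1
          have hy : y ∈ w := by
            rw [← List.count_pos_iff]
            have := hc y
            simp [hxy] at this
            omega
          refine hn y x (Ne.symm hxy) ?_
          have := (List.singleton_sublist.2 hxQ).append
            ((List.singleton_sublist.2 hy).cons_cons x)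
          exact this.cons_cons y
    · obtain ⟨p, d, h⟩ := ih (Q ++ [x]) (by
        rw [List.nodup_append]; simp [hQ]; rintro a ha rfl; exact hx ha)
        (by simpa using hc) (by simpa using hn)
      exact ⟨_, _, B.up _ _ _ _ _ h⟩

theorem B.bbc {Q p d w} (h : B Q p d w) {b c : ℕ} : [b,c].Sublist (Q ++ p) →
    [b,b,c].Sublist (Q ++ w) := by
  induction h with
  | nil => simp
  | up Q p d w x h ih => intro h; simpa using ih (by simpa using h)
  | dn Q p d w y h ih =>
    intro hs
    have key : (Q ++ w).Sublist (y :: Q ++ y :: w) :=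
      ((List.Sublist.refl Q).append (List.sublist_cons_self y w)).trans
              (List.sublist_cons_self _ _)
    rw [List.cons_append, List.cons_sublist_cons'] at hs
    rcases hs with hs | ⟨rfl, hs⟩
    · exact (ih hs).trans key
    · have : c ∈ w := (h.mem c).2 (List.singleton_sublist.1 hs)
      refine List.Sublist.cons_cons b ?_
      exact (((List.singleton_sublist.2 this).cons_cons b)).trans (List.sublist_append_right Q _)

theorem B.abbc {Q p d w} (h : B Q p d w) {a b c : ℕ} : [a,b,c].Sublist (Q ++ p) →
    [a,b,b,c].Sublist (Q ++ w) := by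
  induction h with
  | nil => simp
  | up Q p d w x h ih => intro h; simpa using ih (by simpa using h)
  | dn Q p d w y h ih =>
    intro hs
    have key : (Q ++ w).Sublist (Q ++ y :: w) :=
      ((List.Sublist.refl Q).append (List.sublist_cons_self y w))
    rw [List.cons_append, List.cons_sublist_cons'] at hs
    rcases hs with hs | ⟨rfl, hs⟩
    · exact (ih hs).trans (key.trans (List.sublist_cons_self _ _))
    · exact ((h.bbc hs).trans key).cons_cons a

theorem filt_aux {y : ℕ} {t Q w : List ℕ} (ht : y ∉ t) (hs : t.Sublist (y :: Q ++ y :: w)) :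
    t.Sublist (Q ++ w) := by
  have h := hs.filter (fun x => decide (x ≠ y))
  have h1 : t.filter (fun x => decide (x ≠ y)) = t := by
    rw [List.filter_eq_self]; intro a ha; simp; rintro rfl; exact ht ha
  rw [h1] at h
  refine h.trans ?_
  simp [List.filter_append]
  exact List.filter_sublist.append List.filter_sublist

theorem B.abb {Q p d w} (h : B Q p d w) {a b : ℕ} (hab : a ≠ b) : (Q ++ p).Nodup →
    [a,b,b].Sublist (Q ++ w) → [a,b].Sublist (Q ++ p) := by
  induction h with
  | nil => simp
  | up Q p d w x h ih => intro hn h; simpa using ih (by simpa using hn) (by simpa using h)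
  | dn Q p d w y h ih =>
    intro hn hs
    have hn' := List.nodup_cons.1 hn
    have hyw : y ∉ w := fun h' => hn'.1 ((h.mem y).1 h')
    have hyQ : y ∉ Q := fun h' => hn'.1 (by simp [h'])
    by_cases hay : a = y
    · subst hay
      have hb : b ∈ a :: Q ++ a :: w := hs.subset (by simp)
      have hb : b ∈ Q ++ p := by
        simp [Ne.symm hab] at hb
        rcases hb with hb | hb
        · simp [hb]
        · exact (h.mem b).1 hb
      exact (List.singleton_sublist.2 hb).cons_cons a
    · by_cases hby : b = y
      · subst hby
        rw [List.cons_append, List.cons_sublist_cons'] at hs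
        rcases hs with hs | ⟨rfl, hs⟩
        · have := hs.count_le b
          simp [hab, List.count_eq_zero.2 hyw, List.count_eq_zero.2 hyQ] at this
        · exact absurd rfl hab
      · have := ih hn'.2 (filt_aux (by simp [Ne.symm hay, Ne.symm hby]) hs)
        exact this.trans (List.sublist_cons_self _ _)

theorem B.bbc' {Q p d w} (h : B Q p d w) {b c : ℕ} (hbc : b ≠ c) : (Q ++ p).Nodup →
    [b,b,c].Sublist (Q ++ w) → [b,c].Sublist (Q ++ p) := by
  induction h with
  | nil => simp
  | up Q p d w x h ih => intro hn h; simpa using ih (by simpa using hn) (by simpa using h)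
  | dn Q p d w y h ih =>
    intro hn hs
    have hn' := List.nodup_cons.1 hn
    have hyw : y ∉ w := fun h' => hn'.1 ((h.mem y).1 h')
    have hyQ : y ∉ Q := fun h' => hn'.1 (by simp [h'])
    by_cases hby : b = y
    · subst hby
      have hb : c ∈ b :: Q ++ b :: w := hs.subset (by simp)
      have hb : c ∈ Q ++ p := by
        simp [Ne.symm hbc] at hb
        rcases hb with hb | hb
        · simp [hb]
        · exact (h.mem c).1 hb
      exact (List.singleton_sublist.2 hb).cons_cons b
    · by_cases hcy : c = y
      · subst hcy
        exfalso
        rw [List.cons_append, List.cons_sublist_cons'] at hs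
        rcases hs with hs | ⟨rfl, hs⟩
        · obtain ⟨l1, l2, e, s1, s2⟩ := List.sublist_append_iff.1 hs
          have hQn : Q.Nodup := (List.nodup_append.1 hn'.2).1
          rcases l1 with _ | ⟨u, _ | ⟨v, l1⟩⟩
          · simp at e; subst e
            rw [List.cons_sublist_cons'] at s2
            rcases s2 with s2 | ⟨rfl, s2⟩
            · exact hyw (s2.subset (by simp))
            · exact hbc rfl
          · simp at e; obtain ⟨rfl, rfl⟩ := e
            rw [List.cons_sublist_cons'] at s2
            rcases s2 with s2 | ⟨rfl, s2⟩
            · exact hyw (s2.subset (by simp))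
            · exact hbc rfl
          · simp at e; obtain ⟨rfl, rfl, e⟩ := e
            have := s1.nodup hQn
            simp at this
        · exact hbc rfl
      · have := ih hn'.2 (filt_aux (by simp [Ne.symm hby, Ne.symm hcy]) hs)
        exact this.trans (List.sublist_cons_self _ _)

theorem sub_asymm {l : List ℕ} (hl : l.Nodup) {a b : ℕ} (h1 : [a,b].Sublist l)
    (h2 : [b,a].Sublist l) : False := by
  induction l with
  | nil => simp at h1
  | cons x l ih =>
    have hl' := List.nodup_cons.1 hl
    rw [List.cons_sublist_cons'] at h1 h2
    rcases h1 with h1 | ⟨rfl, h1⟩ <;> rcases h2 with h2 | ⟨rfl, h2⟩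
    · exact ih hl'.2 h1 h2
    · exact hl'.1 (h1.subset (by simp))
    · exact hl'.1 (h2.subset (by simp))
    · exact hl'.1 (h2.subset (by simp))

theorem sub_trans {l : List ℕ} (hl : l.Nodup) {a b c : ℕ} (h1 : [a,b].Sublist l)
    (h2 : [b,c].Sublist l) : [a,b,c].Sublist l := by
  induction l with
  | nil => simp at h1
  | cons x l ih =>
    have hl' := List.nodup_cons.1 hl
    rw [List.cons_sublist_cons'] at h1 h2
    rcases h1 with h1 | ⟨rfl, h1⟩ <;> rcases h2 with h2 | ⟨rfl, h2⟩
    · exact (ih hl'.2 h1 h2).trans (List.sublist_cons_self _ _)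
    · exact absurd (h1.subset (by simp)) hl'.1
    · exact h2.cons_cons _
    · exact absurd (h1.subset (by simp)) hl'.1

theorem iso4 {t : List ℕ} {a b c : ℕ} :
    OrderIsoWord t [a,b,b,c] ↔ ∃ x y z, t = [x,y,y,z] ∧ OrderIsoWord [x,y,z] [a,b,c] := by
  constructor
  · rintro ⟨hl, h⟩
    match t, hl with
    | [x,y,y',z], _ =>
      have h00 := h 1 2 (by simp) (by simp)
      simp at h00
      obtain ⟨_, rfl⟩ := h00
      refine ⟨x, y, z, rfl, rfl, ?_⟩
      intro r s hr hs
      simp at hr hs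
      have := h (if r = 2 then 3 else r) (if s = 2 then 3 else s)
        (by simp; split_ifs <;> omega) (by simp; split_ifs <;> omega)
      interval_cases r <;> interval_cases s <;> simpa using this
  · rintro ⟨x, y, z, rfl, _, h⟩
    refine ⟨rfl, ?_⟩
    intro r s hr hs
    simp at hr hs
    have := h (if 2 ≤ r then r - 1 else r) (if 2 ≤ s then s - 1 else s)
      (by simp; split_ifs <;> omega) (by simp; split_ifs <;> omega)
    interval_cases r <;> interval_cases s <;> simpa using this

theorem iso3_ne {x y z a b c : ℕ} (h : OrderIsoWord [x,y,z] [a,b,c]) (hn : [a,b,c].Nodup) :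
    x ≠ y ∧ y ≠ z := by
  have h1 := (h.2 0 1 (by simp) (by simp)).2
  have h2 := (h.2 1 2 (by simp) (by simp)).2
  simp at h1 h2 hn
  rw [Ne, Ne, h1, h2]; tauto

theorem B.contains {p d w} (h : B [] p d w) (hp : p.Nodup) {a b c : ℕ}
    (hn : [a,b,c].Nodup) : Contains w [a,b,b,c] ↔ Contains p [a,b,c] := by
  constructor
  · rintro ⟨t, ht, hi⟩
    obtain ⟨x, y, z, rfl, hj⟩ := iso4.1 hi
    obtain ⟨h1, h2⟩ := iso3_ne hj hn
    refine ⟨_, sub_trans hp (h.abb h1 hp ?_) (h.bbc' h2 hp ?_), hj⟩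
    · exact (show [x,y,y].Sublist [x,y,y,z] by simp).trans ht
    · exact (List.sublist_cons_self _ _).trans ht
  · rintro ⟨t, ht, hi⟩
    have hl := hi.1
    match t, hl with
    | [x,y,z], _ => exact ⟨_, h.abbc ht, iso4.2 ⟨x, y, z, rfl, hi⟩⟩

theorem nonnest_iff {w : List ℕ} : (Avoids w [1,2,2,1] ∧ Avoids w [2,1,1,2]) ↔
    ∀ a b, a ≠ b → ¬ [a,b,b,a].Sublist w := by
  constructor
  · rintro ⟨h1, h2⟩ a b hab hs
    rcases lt_or_gt_of_ne hab with h | h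
    · refine h1 ⟨_, hs, rfl, ?_⟩
      intro r s hr hs
      simp at hr hs
      interval_cases r <;> interval_cases s <;> simp <;> omega
    · refine h2 ⟨_, hs, rfl, ?_⟩
      intro r s hr hs
      simp at hr hs
      interval_cases r <;> interval_cases s <;> simp <;> omega
  · intro H
    constructor
    · rintro ⟨t, ht, hi⟩
      obtain ⟨x, y, z, rfl, hj⟩ := iso4.1 hi
      have h1 := (hj.2 0 1 (by simp) (by simp)).2
      have h2 := (hj.2 0 2 (by simp) (by simp)).2
      simp at h1 h2
      subst h2
      exact H _ _ h1 ht
    · rintro ⟨t, ht, hi⟩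
      obtain ⟨x, y, z, rfl, hj⟩ := iso4.1 hi
      have h1 := (hj.2 0 1 (by simp) (by simp)).2
      have h2 := (hj.2 0 2 (by simp) (by simp)).2
      simp at h1 h2
      subst h2
      exact H _ _ h1 ht

theorem permWord_nodup {n p} (h : IsPermWord n p) : p.Nodup := by
  rw [List.nodup_iff_count_le_one]; intro a; rw [h a]; split_ifs <;> omega

theorem permWord_perm {n p} (h : IsPermWord n p) : p.Perm (List.range' 1 n) := by
  rw [List.perm_iff_count]
  intro a
  rw [h a, List.Nodup.count List.nodup_range']
  simp [List.mem_range'_1]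
  congr 1
  simp; omega

theorem permWord_length {n p} (h : IsPermWord n p) : p.length = n := by
  simpa using (permWord_perm h).length_eq

theorem B.nonnesting {n p d w} (h : B [] p d w) (hp : p.Nodup) :
    IsNonnesting n w ↔ IsPermWord n p := by
  unfold IsNonnesting
  rw [nonnest_iff]
  have hc : IsMultisetPerm n w ↔ IsPermWord n p := by
    refine forall_congr' fun i => ?_
    have := h.count i
    simp at this
    split_ifs <;> omega
  rw [hc, and_iff_left_iff_imp]
  intro _ a b hab hs
  refine sub_asymm hp (h.abb hab hp ?_) (h.bbc' hab.symm hp ?_)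
  · exact (show [a,b,b].Sublist [a,b,b,a] by simp).trans hs
  · exact (List.sublist_cons_self _ _).trans hs

theorem B.avoid {p d w} (h : B [] p d w) (hp : p.Nodup) (S : Finset (List ℕ))
    (hS : ∀ σ ∈ S, σ.Perm [1, 2, 3]) :
    (∀ σ ∈ S, ∀ a b c : ℕ, σ = [a, b, c] → Avoids w [a, b, b, c]) ↔ ∀ σ ∈ S, Avoids p σ := by
  refine forall₂_congr fun σ hσ => ?_
  have hl := (hS σ hσ).length_eq
  have hn : σ.Nodup := (hS σ hσ).nodup_iff.2 (by simp)
  match σ, hl, hn with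
  | [a,b,c], _, hn =>
    constructor
    · intro H; exact (not_congr (h.contains hp hn)).1 (H a b c rfl)
    · rintro H _ _ _ ⟨⟩; exact (not_congr (h.contains hp hn)).2 H

theorem nonnesting_avoid_middle_doubled (n : ℕ) (hn : 1 ≤ n)
    (S : Finset (List ℕ)) (hS : ∀ σ ∈ S, σ.Perm [1, 2, 3]) :
    {w : List ℕ | IsNonnesting n w ∧
        ∀ σ ∈ S, ∀ a b c : ℕ, σ = [a, b, c] → Avoids w [a, b, b, c]}.ncard =
      {p : List ℕ | IsPermWord n p ∧ ∀ σ ∈ S, Avoids p σ}.ncard * catalan n := by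
  have hcat : {D : DyckWord | D.semilength = n}.ncard = catalan n := by
    rw [← DyckWord.card_dyckWord_semilength_eq_catalan n, ← Nat.card_eq_fintype_card]
    rfl
  rw [← hcat, ← Set.ncard_prod]
  symm
  have hex : ∀ x : List ℕ × DyckWord, x ∈ ({p : List ℕ | IsPermWord n p ∧ ∀ σ ∈ S, Avoids p σ} ×ˢ
      {D : DyckWord | D.semilength = n}) → ∃ w, B [] x.1 x.2.toList w := by
    rintro ⟨p, D⟩ ⟨⟨hp, _⟩, hD⟩
    have hl := permWord_length hp
    simp only [Set.mem_setOf_eq, DyckWord.semilength] at hD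
    refine B.exists (by rw [hD, hl]) ?_ ?_
    · rw [← D.count_U_eq_count_D, hD, hl]; simp
    · intro i; simpa using D.count_D_le_count_U i
  choose f hf using hex
  refine Set.ncard_congr f ?_ ?_ ?_
  · rintro ⟨p, D⟩ hx
    have hp := permWord_nodup hx.1.1
    have h := hf _ hx
    exact ⟨(h.nonnesting hp).2 hx.1.1, (h.avoid hp S hS).2 hx.1.2⟩
  · rintro ⟨p, D⟩ ⟨p', D'⟩ hx hx' e
    have h := hf _ hx
    have h' := hf _ hx'
    rw [← e] at h'
    obtain ⟨h1, h2⟩ := h.inj h' (permWord_nodup hx.1.1) (permWord_nodup hx'.1.1)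
    exact Prod.ext h1 (DyckWord.ext h2)
  · rintro w ⟨hw, hA⟩
    obtain ⟨p, d, h⟩ := B.surj w [] List.nodup_nil
      (by intro x; simp; rw [hw.1 x]; split_ifs <;> simp) (by simpa using nonnest_iff.1 hw.2)
    have hp : p.Nodup := by
      rw [List.nodup_iff_count_le_one]; intro a
      have h1 := h.count a
      rw [hw.1 a] at h1
      simp at h1
      split_ifs at h1 <;> omega
    have hP := (h.nonnesting hp).1 hw
    let D : DyckWord := ⟨d, by rw [h.countU, h.countD]; simp, fun i => by simpa using h.take i⟩
    have hx : (p, D) ∈ ({p : List ℕ | IsPermWord n p ∧ ∀ σ ∈ S, Avoids p σ} ×ˢ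
      {D : DyckWord | D.semilength = n}) :=
      ⟨⟨hP, (h.avoid hp S hS).1 hA⟩, by
        show d.count DyckStep.U = n
        rw [h.countU, permWord_length hP]⟩
    exact ⟨(p, D), hx, (hf _ hx).uniq h⟩
end
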